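/- Let P ⊆ ℤ^n_{≥0} be a polymatroid over [n]. Then the sequence of coefficients [x^0]I_P(x), [x^1]I_P(x), …, [x^{r'_2(P)−1}]I_P(x) of the interior polynomial is unimodal: there exists an index k such that [x^i]I_P(x) ≤ [x^{i+1}]I_P(x) for all i < k with i+1 ≤ r'_2(P)−1, and [x^i]I_P(x) ≥ [x^{i+1}]I_P(x) for all i > k with i+1 ≤ r'_2(P)−1. -/

import Mathlib

open Finset Polynomial

/-- `f` is the rank function of a polymatroid over the ground set `[n]` (encoded as `Fin n`):
normalization, monotonicity and submodularity. -/
def IsPolymatroidRank (n : ℕ) (f : Finset (Fin n) → ℕ) : Prop :=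
  f ∅ = 0 ∧ (∀ I J : Finset (Fin n), I ⊆ J → f I ≤ f J) ∧
    ∀ I J : Finset (Fin n), f (I ∪ J) + f (I ∩ J) ≤ f I + f J

/-- The set of bases of the polymatroid `P ⊆ ℤ^n_{≥0}` with rank function `f`:
all nonnegative integer vectors `a` with `∑_{i ∈ I} a i ≤ f I` for every `I ⊆ [n]`
and `∑_{i ∈ [n]} a i = f [n]`.  (Every such vector has entries `≤ f [n]`, whence the
bounding box used to produce a `Finset`.) -/
def polyBases (n : ℕ) (f : Finset (Fin n) → ℕ) : Finset (Fin n → ℤ) :=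
  ((Finset.univ : Finset (Fin n → Fin (f Finset.univ + 1))).image
      (fun a i => ((a i : ℕ) : ℤ))).filter
    fun a => (∀ i, 0 ≤ a i) ∧ (∀ I : Finset (Fin n), ∑ i ∈ I, a i ≤ (f I : ℤ)) ∧
      ∑ i, a i = (f Finset.univ : ℤ)

/-- The externally active indices of a basis `a`: those `i` such that
`a + e_i - e_j ∉ P` for every `j < i`. -/
def extAct (n : ℕ) (f : Finset (Fin n) → ℕ) (a : Fin n → ℤ) : Finset (Fin n) :=
  Finset.univ.filter fun i => ∀ j, j < i →
    (fun t => a t + (if t = i then 1 else 0) - (if t = j then 1 else 0)) ∉ polyBases n f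

/-- The internally active indices of a basis `a`: those `i` such that
`a - e_i + e_j ∉ P` for every `j < i`. -/
def intAct (n : ℕ) (f : Finset (Fin n) → ℕ) (a : Fin n → ℤ) : Finset (Fin n) :=
  Finset.univ.filter fun i => ∀ j, j < i →
    (fun t => a t - (if t = i then 1 else 0) + (if t = j then 1 else 0)) ∉ polyBases n f

/-- The exterior polynomial `X_P(y) = ∑_{a ∈ P} y^(n - |Ext(a)|)`. -/
noncomputable def exteriorPoly (n : ℕ) (f : Finset (Fin n) → ℕ) : Polynomial ℤ :=
  ∑ a ∈ polyBases n f, X ^ (n - (extAct n f a).card)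

/-- The interior polynomial `I_P(x) = ∑_{a ∈ P} x^(n - |Int(a)|)`. -/
noncomputable def interiorPoly (n : ℕ) (f : Finset (Fin n) → ℕ) : Polynomial ℤ :=
  ∑ a ∈ polyBases n f, X ^ (n - (intAct n f a).card)

/-- `r_k(P) = min { n - |F| : F ⊆ [n], f F ≤ f [n] - k }` (junk value `0` if no such `F`). -/
noncomputable def rk (n : ℕ) (f : Finset (Fin n) → ℕ) (k : ℕ) : ℕ :=
  sInf {m | ∃ F : Finset (Fin n), (f F : ℤ) ≤ (f Finset.univ : ℤ) - k ∧ m = n - F.card}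

/-- `r'_k(P) = min { |F| : F ⊆ [n], ∑_{i ∈ F} f {i} - f F ≥ k }` (junk value `0` if no such `F`). -/
noncomputable def rk' (n : ℕ) (f : Finset (Fin n) → ℕ) (k : ℕ) : ℕ :=
  sInf {m | ∃ F : Finset (Fin n), (k : ℤ) ≤ (∑ i ∈ F, (f {i} : ℤ)) - (f F : ℤ) ∧ m = F.card}

/-- `H_j(P)`: the flats `H` (i.e. `f (H ∪ {e}) > f H` for all `e ∉ H`) with
`f H = f [n] - 1` and `n - |H| = j`. -/
def Hset (n : ℕ) (f : Finset (Fin n) → ℕ) (j : ℕ) : Finset (Finset (Fin n)) :=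
  Finset.univ.filter fun H =>
    (∀ e, e ∉ H → f H < f (insert e H)) ∧ (f H : ℤ) = (f Finset.univ : ℤ) - 1 ∧
      n - H.card = j

/-- `C_j(P)`: the sets `C` with `|C| = j`, `∑_{i ∈ C} f {i} - f C = 1` and
`∑_{i ∈ C \ {j'}} f {i} = f (C \ {j'})` for every `j' ∈ C`. -/
def Cset (n : ℕ) (f : Finset (Fin n) → ℕ) (j : ℕ) : Finset (Finset (Fin n)) :=
  Finset.univ.filter fun C => C.card = j ∧
    (∑ i ∈ C, (f {i} : ℤ)) - (f C : ℤ) = 1 ∧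
    ∀ j' ∈ C, (∑ i ∈ C.erase j', (f {i} : ℤ)) = (f (C.erase j') : ℤ)

/-- The dual rank function `f*(I) = f([n] \ I) - f([n]) + ∑_{i ∈ I} f {i}`
(the subtraction is exact for a polymatroid rank function). -/
def fdual (n : ℕ) (f : Finset (Fin n) → ℕ) : Finset (Fin n) → ℕ :=
  fun I => f (Finset.univ \ I) + (∑ i ∈ I, f {i}) - f Finset.univ


lemma aux_mc_conv (k m d : ℕ) :
    Nat.multichoose (m+1) (d+k) = ∑ i ∈ range (m+1), Nat.multichoose d i * Nat.multichoose (m+1-i) k := by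
  induction m generalizing d with
  | zero => simp
  | succ m ihm =>
    induction d with
    | zero =>
      rw [Finset.sum_range_succ']
      simp
    | succ d ihd =>
      have h1 : d + 1 + k = (d + k) + 1 := by ring
      rw [h1, Nat.multichoose_succ_succ, ← h1, ihm (d+1), ihd]
      rw [Finset.sum_range_succ' _ (m+1), Finset.sum_range_succ' _ (m+1)]
      have h2 : ∀ i ∈ range (m+1), Nat.multichoose (d+1) (i+1) * Nat.multichoose (m+1+1-(i+1)) k
        = Nat.multichoose d (i+1) * Nat.multichoose (m+1+1-(i+1)) k
          + Nat.multichoose (d+1) i * Nat.multichoose (m+1-i) k := by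
        intro i _
        rw [Nat.multichoose_succ_succ, add_mul]
        congr 3
        omega
      rw [Finset.sum_congr rfl h2, Finset.sum_add_distrib]
      simp
      ring

lemma aux_mc_conv' (k m d : ℕ) (hd : 1 ≤ d) :
    Nat.multichoose m (d+k) = ∑ i ∈ range m, Nat.multichoose d i * Nat.multichoose (m-i) k := by
  cases m with
  | zero =>
    obtain ⟨e, rfl⟩ := Nat.exists_eq_add_of_le hd
    have : 1 + e + k = (e + k) + 1 := by ring
    rw [this]; simp
  | succ m => exact aux_mc_conv k m d

lemma aux_mc_mul (s k : ℕ) : Nat.multichoose (s+1) k * s = Nat.multichoose s k * (s + k) := by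
  induction k with
  | zero => simp
  | succ k ih =>
    rw [Nat.multichoose_succ_succ]
    have key : Nat.multichoose s (k+1) * (k+1) = Nat.multichoose s k * (s+k) := by
      cases s with
      | zero => 
        cases k <;> simp
      | succ s =>
        rw [Nat.multichoose_eq, Nat.multichoose_eq]
        have := Nat.choose_succ_right_eq (s+1+k) k
        have h3 := Nat.add_one_mul_choose_eq (s+k) k
        have e1 : s + 1 + (k+1) - 1 = s + k + 1 := by omega
        have e2 : s + 1 + k - 1 = s + k := by omega
        rw [e1, e2, ← h3]; ring
    rw [add_mul, ih]
    nlinarith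

lemma aux_mc_pos (s k : ℕ) : 0 < Nat.multichoose (s+1) k := by
  rw [Nat.multichoose_eq]; exact Nat.choose_pos (by omega)

lemma aux_mc_mono_left (k : ℕ) : Monotone (fun s => Nat.multichoose s k) := by
  apply monotone_nat_of_le_succ
  intro s
  cases k with
  | zero => simp
  | succ k => simp only [Nat.multichoose_succ_succ]; omega

lemma aux_mc_mono_right (s : ℕ) {a b : ℕ} (ha : 1 ≤ a) (hab : a ≤ b) :
    Nat.multichoose s a ≤ Nat.multichoose s b := by
  induction b, hab using Nat.le_induction with
  | base => exact le_rfl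
  | succ b hb ih =>
    refine ih.trans ?_
    cases s with
    | zero =>
      obtain ⟨c, rfl⟩ : ∃ c, b = c + 1 := ⟨b-1, by omega⟩
      simp
    | succ s => rw [Nat.multichoose_succ_succ]; omega

lemma aux_mc_shift (s d : ℕ) {k : ℕ} (hk : 1 ≤ k) :
    Nat.multichoose s (d + k) ≤ (s+1)^d * Nat.multichoose s k := by
  induction d with
  | zero => simp
  | succ d ih =>
    have h1 : d + 1 + k = (d + k) + 1 := by ring
    have key : Nat.multichoose s (d+k+1) * (d+k+1) = Nat.multichoose s (d+k) * (s+(d+k)) := by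
      have a1 := aux_mc_mul s (d+k+1)
      have a2 := aux_mc_mul s (d+k)
      rw [Nat.multichoose_succ_succ, add_mul, a2] at a1
      nlinarith
    have h2 : Nat.multichoose s (d+k+1) ≤ (s+1) * Nat.multichoose s (d+k) := by
      have h4 : Nat.multichoose s (d+k+1) * (d+k+1) ≤ ((s+1) * Nat.multichoose s (d+k)) * (d+k+1) := by
        rw [key]
        have : s + (d+k) ≤ (s+1)*(d+k+1) := by nlinarith
        calc _ ≤ Nat.multichoose s (d+k) * ((s+1)*(d+k+1)) := Nat.mul_le_mul_left _ this
          _ = _ := by ring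
      exact Nat.le_of_mul_le_mul_right h4 (by omega)
    rw [h1]
    calc _ ≤ _ := h2
      _ ≤ (s+1) * ((s+1)^d * Nat.multichoose s k) := Nat.mul_le_mul_left _ ih
      _ = _ := by ring

open Asymptotics Filter in
lemma aux_mc_o (s : ℕ) :
    (fun k : ℕ => (Nat.multichoose s k : ℝ)) =o[atTop] (fun k : ℕ => (Nat.multichoose (s+1) k : ℝ)) := by
  rw [isLittleO_iff]
  intro c hc
  obtain ⟨N, hN⟩ := exists_nat_gt (s / c)
  filter_upwards [eventually_ge_atTop N, eventually_ge_atTop 1] with k hk hk1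
  rw [Real.norm_of_nonneg (by positivity), Real.norm_of_nonneg (by positivity)]
  have h := aux_mc_mul s k
  have h' : (Nat.multichoose (s+1) k : ℝ) * s = Nat.multichoose s k * (s + k) := by exact_mod_cast h
  have hkN : (N : ℝ) ≤ k := by exact_mod_cast hk
  have h1 : (s : ℝ) ≤ c * (s + k) := by
    rw [div_lt_iff₀ hc] at hN
    have : (0:ℝ) ≤ s := by positivity
    nlinarith
  have hp : (0 : ℝ) < s + k := by
    have : (1 : ℝ) ≤ k := by exact_mod_cast hk1
    positivity
  have : (Nat.multichoose s k : ℝ) * (s+k) ≤ (c * Nat.multichoose (s+1) k) * (s+k) := by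
    rw [← h']
    have : (0:ℝ) ≤ Nat.multichoose (s+1) k := by positivity
    nlinarith
  exact le_of_mul_le_mul_right this hp

open Asymptotics Filter in
lemma aux_mc_o' {s t : ℕ} (h : s < t) :
    (fun k : ℕ => (Nat.multichoose s k : ℝ)) =o[atTop] (fun k : ℕ => (Nat.multichoose t k : ℝ)) := by
  refine (aux_mc_o s).trans_isBigO ?_
  refine IsBigO.of_bound 1 (Eventually.of_forall fun k => ?_)
  rw [Real.norm_of_nonneg (by positivity), Real.norm_of_nonneg (by positivity), one_mul]
  exact_mod_cast aux_mc_mono_left k h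

open Asymptotics Filter in
lemma aux_lead (n r : ℕ) (hr : r ≤ n) (u : ℕ → ℝ)
    (hE : (fun k : ℕ => ∑ i ∈ range n, u i * (Nat.multichoose (n-i) k : ℝ)) =o[atTop]
      (fun k : ℕ => (Nat.multichoose (n-r+1) k : ℝ))) : ∀ i < r, u i = 0 := by
  intro i
  induction i using Nat.strong_induction_on with
  | _ i ih =>
    intro hi
    by_contra hu
    have h1 : (fun k : ℕ => u i * (Nat.multichoose (n-i) k : ℝ)) =o[atTop]
        (fun k : ℕ => (Nat.multichoose (n-i) k : ℝ)) := by
      have e : (fun k : ℕ => u i * (Nat.multichoose (n-i) k : ℝ)) = fun k : ℕ =>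
        (∑ j ∈ range n, u j * (Nat.multichoose (n-j) k : ℝ)) -
          ∑ j ∈ (range n).erase i, u j * (Nat.multichoose (n-j) k : ℝ) := by
        funext k
        rw [← Finset.add_sum_erase (range n) _ (mem_range.2 (lt_of_lt_of_le hi hr))]
        ring
      rw [e]
      refine IsLittleO.sub ?_ ?_
      · refine hE.trans_isBigO ?_
        refine IsBigO.of_bound 1 (Eventually.of_forall fun k => ?_)
        rw [Real.norm_of_nonneg (by positivity), Real.norm_of_nonneg (by positivity), one_mul]
        exact_mod_cast aux_mc_mono_left k (by omega : n - r + 1 ≤ n - i)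
      · refine IsLittleO.fun_sum ?_
        intro j hj
        rw [mem_erase, mem_range] at hj
        rcases lt_or_gt_of_ne hj.1 with h | h
        · rw [ih j h (by omega)]
          simp
        · exact (aux_mc_o' (by omega : n - j < n - i)).const_mul_left _
    have h2 := (isLittleO_const_mul_left_iff hu).1 h1
    refine isLittleO_irrefl (Frequently.of_forall fun k => ?_) h2
    obtain ⟨c, hc⟩ : ∃ c, n - i = c + 1 := ⟨n-i-1, by omega⟩
    rw [hc]
    exact_mod_cast Nat.pos_iff_ne_zero.1 (aux_mc_pos c k)

/-- convolution with the coefficients of `(1-x)^(-d)` -/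
def auxCv (w : ℕ → ℤ) (d i : ℕ) : ℤ := ∑ j ∈ range (i+1), w j * (Nat.multichoose d (i-j) : ℤ)

lemma auxCv_zero (w : ℕ → ℤ) (i : ℕ) : auxCv w 0 i = w i := by
  unfold auxCv
  rw [Finset.sum_range_succ, Finset.sum_eq_zero]
  · simp
  · intro j hj
    rw [mem_range] at hj
    obtain ⟨c, hc⟩ : ∃ c, i - j = c + 1 := ⟨i-j-1, by omega⟩
    simp [hc]

lemma auxCv_init (w : ℕ → ℤ) (d : ℕ) : auxCv w d 0 = w 0 := by
  simp [auxCv]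

lemma auxCv_succ (w : ℕ → ℤ) (d i : ℕ) :
    auxCv w (d+1) (i+1) = auxCv w (d+1) i + auxCv w d (i+1) := by
  unfold auxCv
  rw [Finset.sum_range_succ, Finset.sum_range_succ _ (i+1), ← add_assoc, ← Finset.sum_add_distrib]
  congr 1
  · apply Finset.sum_congr rfl
    intro j hj
    rw [mem_range] at hj
    have : i + 1 - j = (i - j) + 1 := by omega
    rw [this, Nat.multichoose_succ_succ]
    push_cast; ring
  · simp

lemma auxCv_sign (w : ℕ → ℤ) (h0 : 0 ≤ w 0) (h : ∀ j, 1 ≤ j → w j ≤ 0) (d : ℕ) :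
    ∀ i j, i ≤ j → auxCv w d i < 0 → auxCv w d j ≤ 0 := by
  induction d with
  | zero =>
    intro i j hij hi
    rw [auxCv_zero] at *
    rcases Nat.eq_zero_or_pos j with rfl | hj
    · obtain rfl : i = 0 := by omega
      omega
    · exact h j hj
  | succ d ih =>
    have hex : ∀ i, auxCv w (d+1) i < 0 → ∃ m ≤ i, auxCv w d m < 0 := by
      intro i
      induction i with
      | zero => intro hi; rw [auxCv_init] at hi; omega
      | succ i ihi =>
        intro hi
        by_cases hd : auxCv w d (i+1) < 0
        · exact ⟨_, le_rfl, hd⟩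
        · rw [auxCv_succ] at hi
          obtain ⟨m, hm, hm'⟩ := ihi (by omega)
          exact ⟨m, by omega, hm'⟩
    intro i j hij hi
    obtain ⟨m, hm, hm'⟩ := hex i hi
    induction j, hij using Nat.le_induction with
    | base => exact hi.le
    | succ j hj ihj =>
      rw [auxCv_succ]
      have := ih m (j+1) (by omega) hm'
      omega

lemma auxCv_unimodal (w : ℕ → ℤ) (h0 : 0 ≤ w 0) (h : ∀ j, 1 ≤ j → w j ≤ 0) (d N : ℕ) :
    ∃ k : ℕ, (∀ i : ℕ, i < k → i + 1 ≤ N → auxCv w (d+1) i ≤ auxCv w (d+1) (i+1)) ∧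
      (∀ i : ℕ, k < i → i + 1 ≤ N → auxCv w (d+1) (i+1) ≤ auxCv w (d+1) i) := by
  classical
  have hs := auxCv_sign w h0 h d
  simp only [auxCv_succ]
  by_cases hneg : ∃ i, auxCv w d i < 0
  · refine ⟨Nat.find hneg - 1, ?_, ?_⟩
    · intro i hi _
      have := not_lt.1 (Nat.find_min hneg (by omega : i + 1 < Nat.find hneg))
      omega
    · intro i hi _
      have := hs _ (i+1) (by omega) (Nat.find_spec hneg)
      omega
  · push Not at hneg
    refine ⟨N, ?_, ?_⟩
    · intro i _ _
      have := hneg (i+1)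
      omega
    · intro i _ _
      omega

/-- feasibility for the contrapolymatroid defined by `g` -/
def AuxFeas {n : ℕ} (g : Finset (Fin n) → ℤ) (b : Fin n → ℤ) : Prop :=
  ∀ I, g I ≤ ∑ i ∈ I, b i

/-- supermodularity and normalization -/
def AuxSup {n : ℕ} (g : Finset (Fin n) → ℤ) : Prop :=
  g ∅ = 0 ∧ (∀ i, g {i} = 0) ∧ ∀ I J, g I + g J ≤ g (I ∪ J) + g (I ∩ J)

/-- `b + e_i - e_j` -/
def auxMove {n : ℕ} (b : Fin n → ℤ) (i j : Fin n) : Fin n → ℤ :=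
  fun t => b t + (if t = i then 1 else 0) - (if t = j then 1 else 0)

lemma AuxFeas.nonneg {n : ℕ} {g : Finset (Fin n) → ℤ} (hg : AuxSup g) {b : Fin n → ℤ}
    (hb : AuxFeas g b) (i : Fin n) : 0 ≤ b i := by
  have := hb {i}
  rw [hg.2.1, sum_singleton] at this
  exact this

lemma AuxSup.mono {n : ℕ} {g : Finset (Fin n) → ℤ} (hg : AuxSup g) {I J : Finset (Fin n)}
    (h : I ⊆ J) : g I ≤ g J := by
  induction J using Finset.induction_on generalizing I with
  | empty => rw [Finset.subset_empty.1 h]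
  | insert a J ha ih =>
    have step : g J ≤ g (insert a J) := by
      have := hg.2.2 J {a}
      rw [hg.2.1, inter_singleton_of_notMem ha, hg.1, union_singleton] at this
      omega
    by_cases haI : a ∈ I
    · have h1 := hg.2.2 J I
      have h2 : J ∪ I = insert a J := by
        ext x; simp only [mem_union, mem_insert]
        constructor
        · rintro (h' | h')
          · exact Or.inr h'
          · exact mem_insert.1 (h h')
        · rintro (rfl | h')
          · exact Or.inr haI
          · exact Or.inl h'
      have h3 := ih (inter_subset_left : J ∩ I ⊆ J)
      rw [h2] at h1
      omega
    · refine le_trans (ih ?_) step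
      intro x hx
      rcases mem_insert.1 (h hx) with rfl | h'
      · exact absurd hx haI
      · exact h'

lemma AuxSup.nonneg {n : ℕ} {g : Finset (Fin n) → ℤ} (hg : AuxSup g) (I : Finset (Fin n)) :
    0 ≤ g I := by
  rw [← hg.1]; exact hg.mono (empty_subset _)

lemma aux_tight_union {n : ℕ} {g : Finset (Fin n) → ℤ} (hg : AuxSup g) {b : Fin n → ℤ}
    (hb : AuxFeas g b) {I J : Finset (Fin n)} (hI : g I = ∑ i ∈ I, b i) (hJ : g J = ∑ i ∈ J, b i) :
    g (I ∪ J) = ∑ i ∈ I ∪ J, b i := by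
  have h1 := hg.2.2 I J
  have h2 := hb (I ∪ J)
  have h3 := hb (I ∩ J)
  have h4 := Finset.sum_union_inter (s₁ := I) (s₂ := J) (f := b)
  omega

lemma aux_tight_biUnion {n : ℕ} {g : Finset (Fin n) → ℤ} (hg : AuxSup g) {b : Fin n → ℤ}
    (hb : AuxFeas g b) (S : Finset (Fin n)) (T : Fin n → Finset (Fin n))
    (hT : ∀ j ∈ S, g (T j) = ∑ i ∈ T j, b i) :
    g (S.biUnion T) = ∑ i ∈ S.biUnion T, b i := by
  induction S using Finset.induction_on with
  | empty => simp [hg.1]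
  | insert a S ha ih =>
    rw [biUnion_insert]
    exact aux_tight_union hg hb (hT a (mem_insert_self _ _))
      (ih fun j hj => hT j (mem_insert_of_mem hj))

lemma auxMove_sum {n : ℕ} (b : Fin n → ℤ) (i j : Fin n) (I : Finset (Fin n)) :
    ∑ t ∈ I, auxMove b i j t = ∑ t ∈ I, b t + (if i ∈ I then 1 else 0) - (if j ∈ I then 1 else 0) := by
  simp [auxMove, Finset.sum_add_distrib, Finset.sum_sub_distrib]

lemma aux_active_tight {n : ℕ} {g : Finset (Fin n) → ℤ} (hg : AuxSup g) {b : Fin n → ℤ}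
    (hb : AuxFeas g b) (i : Fin n) (h : ∀ j < i, ¬ AuxFeas g (auxMove b i j)) :
    ∃ T, g T = ∑ t ∈ T, b t ∧ (∀ j < i, j ∈ T) ∧ i ∉ T := by
  have h1 : ∀ j, ∃ T, j < i → g T = ∑ t ∈ T, b t ∧ j ∈ T ∧ i ∉ T := by
    intro j
    by_cases hj : j < i
    · have := h j hj
      unfold AuxFeas at this
      push Not at this
      obtain ⟨I, hI⟩ := this
      rw [auxMove_sum] at hI
      have := hb I
      refine ⟨I, fun _ => ?_⟩
      split_ifs at hI with h1 h2 h2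
      · omega
      · omega
      · exact ⟨by omega, h2, h1⟩
      · omega
    · exact ⟨∅, fun h => absurd h hj⟩
  choose T hT using h1
  refine ⟨(univ.filter (· < i)).biUnion T, ?_, ?_, ?_⟩
  · exact aux_tight_biUnion hg hb _ _ fun j hj => (hT j (mem_filter.1 hj).2).1
  · intro j hj
    exact mem_biUnion.2 ⟨j, by simp [hj], (hT j hj).2.1⟩
  · intro hi
    obtain ⟨j, hj, hj'⟩ := mem_biUnion.1 hi
    exact (hT j (mem_filter.1 hj).2).2.2 hj'

lemma aux_dominated {n : ℕ} {g : Finset (Fin n) → ℤ} (hg : AuxSup g) (k : ℕ) (b' : Fin n → ℤ)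
    (hb : AuxFeas g b') (hk : ∑ i, b' i = g univ + k) :
    ∃ b, AuxFeas g b ∧ (∀ i, b i ≤ b' i) ∧ ∑ i, b i = g univ := by
  induction k generalizing b' with
  | zero => exact ⟨b', hb, fun _ => le_rfl, by simpa using hk⟩
  | succ k ih =>
    by_cases h : ∃ i, AuxFeas g (fun t => b' t - if t = i then 1 else 0)
    · obtain ⟨i, hi⟩ := h
      obtain ⟨b, h1, h2, h3⟩ := ih _ hi (by
        rw [Finset.sum_sub_distrib, hk]; simp; ring)
      refine ⟨b, h1, fun t => (h2 t).trans ?_, h3⟩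
      split_ifs <;> omega
    · exfalso
      push Not at h
      have h1 : ∀ i, ∃ T, g T = ∑ t ∈ T, b' t ∧ i ∈ T := by
        intro i
        have := h i
        unfold AuxFeas at this
        push Not at this
        obtain ⟨I, hI⟩ := this
        refine ⟨I, ?_⟩
        have h2 := hb I
        rw [Finset.sum_sub_distrib] at hI
        by_cases hiI : i ∈ I
        · simp [hiI] at hI
          exact ⟨by omega, hiI⟩
        · simp [hiI] at hI
          omega
      choose T hT using h1
      have := aux_tight_biUnion hg hb univ T fun j _ => (hT j).1
      have hu : univ.biUnion T = univ := by
        ext x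
        simp only [mem_univ, iff_true]
        exact mem_biUnion.2 ⟨x, mem_univ _, (hT x).2⟩
      rw [hu, hk] at this
      push_cast at this
      omega

lemma aux_improve {n : ℕ} {g : Finset (Fin n) → ℤ} (b' : Fin n → ℤ) (M : ℕ) :
    ∀ b, AuxFeas g b → (∀ i, b i ≤ b' i) → ∑ i, b i = g univ →
      ∑ t : Fin n, (t : ℤ) * (b' t - b t) ≤ M →
    ∃ b, AuxFeas g b ∧ (∀ i, b i ≤ b' i) ∧ ∑ i, b i = g univ ∧
      ∀ i, b i < b' i → ∀ j < i, ¬ AuxFeas g (auxMove b i j) := by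
  induction M with
  | zero =>
    intro b h1 h2 h3 h4
    refine ⟨b, h1, h2, h3, ?_⟩
    intro i hi j hj _
    have h5 : (i : ℤ) * (b' i - b i) ≤ ∑ t : Fin n, (t : ℤ) * (b' t - b t) :=
      Finset.single_le_sum (f := fun t : Fin n => (t : ℤ) * (b' t - b t))
        (fun t _ => mul_nonneg (by positivity) (by have := h2 t; omega)) (mem_univ i)
    have h6 : 0 < (i : ℤ) := by
      have : (j : ℕ) < i := hj
      omega
    have h7 : 0 < (i : ℤ) * (b' i - b i) := mul_pos h6 (by omega)
    simp only [Nat.cast_zero] at h4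
    omega
  | succ M ih =>
    intro b h1 h2 h3 h4
    by_cases h : ∀ i, b i < b' i → ∀ j < i, ¬ AuxFeas g (auxMove b i j)
    · exact ⟨b, h1, h2, h3, h⟩
    · push Not at h
      obtain ⟨i, hi, j, hj, hF⟩ := h
      refine ih (auxMove b i j) hF ?_ ?_ ?_
      · intro t
        unfold auxMove
        have := h2 t
        by_cases ht : t = i
        · subst ht
          simp [hj.ne']; omega
        · simp [ht]
          split_ifs <;> omega
      · rw [auxMove_sum]; simp [h3]
      · have e : ∑ t : Fin n, (t : ℤ) * (b' t - auxMove b i j t)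
          = ∑ t : Fin n, (t : ℤ) * (b' t - b t) - i + j := by
          have : ∀ t : Fin n, (t : ℤ) * (b' t - auxMove b i j t) =
            (t : ℤ) * (b' t - b t) - (if t = i then (t : ℤ) else 0) + (if t = j then (t : ℤ) else 0) := by
            intro t
            unfold auxMove
            split_ifs <;> ring
          rw [Finset.sum_congr rfl fun t _ => this t, Finset.sum_add_distrib, Finset.sum_sub_distrib]
          simp
        rw [e]
        have : (j : ℕ) < i := hj
        push_cast at h4
        omega

lemma aux_exists {n : ℕ} {g : Finset (Fin n) → ℤ} (hg : AuxSup g) (k : ℕ) (b' : Fin n → ℤ)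
    (hb : AuxFeas g b') (hk : ∑ i, b' i = g univ + k) :
    ∃ b, AuxFeas g b ∧ (∀ i, b i ≤ b' i) ∧ ∑ i, b i = g univ ∧
      ∀ i, b i < b' i → ∀ j < i, ¬ AuxFeas g (auxMove b i j) := by
  obtain ⟨b, h1, h2, h3⟩ := aux_dominated hg k b' hb hk
  exact aux_improve b' (∑ t : Fin n, (t : ℤ) * (b' t - b t)).toNat b h1 h2 h3 (Int.self_le_toNat _)

lemma aux_unique_half {n : ℕ} {g : Finset (Fin n) → ℤ} (hg : AuxSup g) (b' b1 b2 : Fin n → ℤ)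
    (h1 : AuxFeas g b1) (s1 : ∑ i, b1 i = g univ)
    (a1 : ∀ i, b1 i < b' i → ∀ j < i, ¬ AuxFeas g (auxMove b1 i j))
    (h2 : AuxFeas g b2) (l2 : ∀ i, b2 i ≤ b' i) (s2 : ∑ i, b2 i = g univ)
    (i : Fin n) (hi : b1 i < b2 i) (habove : ∀ t, i < t → b1 t = b2 t) : False := by
  obtain ⟨T, hT, hT1, hT2⟩ := aux_active_tight hg h1 i (a1 i (lt_of_lt_of_le hi (l2 i)))
  have h3 := h2 T
  rw [hT] at h3
  have e1 := Finset.sum_add_sum_compl T b1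
  have e2 := Finset.sum_add_sum_compl T b2
  have : ∑ t ∈ Tᶜ, b1 t < ∑ t ∈ Tᶜ, b2 t := by
    apply Finset.sum_lt_sum
    · intro t ht
      rcases lt_trichotomy t i with h | h | h
      · exact absurd (hT1 t h) (mem_compl.1 ht)
      · rw [h]; exact hi.le
      · exact (habove t h).le
    · exact ⟨i, mem_compl.2 hT2, hi⟩
  omega

lemma aux_unique {n : ℕ} {g : Finset (Fin n) → ℤ} (hg : AuxSup g) (b' b1 b2 : Fin n → ℤ)
    (h1 : AuxFeas g b1) (l1 : ∀ i, b1 i ≤ b' i) (s1 : ∑ i, b1 i = g univ)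
    (a1 : ∀ i, b1 i < b' i → ∀ j < i, ¬ AuxFeas g (auxMove b1 i j))
    (h2 : AuxFeas g b2) (l2 : ∀ i, b2 i ≤ b' i) (s2 : ∑ i, b2 i = g univ)
    (a2 : ∀ i, b2 i < b' i → ∀ j < i, ¬ AuxFeas g (auxMove b2 i j)) : b1 = b2 := by
  by_contra hne
  obtain ⟨i0, hi0⟩ := Function.ne_iff.1 hne
  have hS : (univ.filter fun i => b1 i ≠ b2 i).Nonempty := ⟨i0, by simp [hi0]⟩
  obtain ⟨i, hi, hmax⟩ := Finset.exists_max_image _ id hS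
  have habove : ∀ t, i < t → b1 t = b2 t := by
    intro t ht
    by_contra hh
    exact absurd (hmax t (by simp [hh])) (not_le.2 ht)
  rcases lt_or_gt_of_ne (mem_filter.1 hi).2 with h | h
  · exact aux_unique_half hg b' b1 b2 h1 s1 a1 h2 l2 s2 i h habove
  · exact aux_unique_half hg b' b2 b1 h2 s2 a2 h1 l1 s1 i h fun t ht => (habove t ht).symm

def auxG (n : ℕ) (f : Finset (Fin n) → ℕ) (I : Finset (Fin n)) : ℤ :=
  ∑ i ∈ I, (f {i} : ℤ) - (f I : ℤ)

lemma auxG_sup {n : ℕ} {f : Finset (Fin n) → ℕ} (hf : IsPolymatroidRank n f) : AuxSup (auxG n f) := by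
  refine ⟨by simp [auxG, hf.1], by simp [auxG], ?_⟩
  intro I J
  unfold auxG
  have h1 := hf.2.2 I J
  have h4 := Finset.sum_union_inter (s₁ := I) (s₂ := J) (f := fun i => (f {i} : ℤ))
  zify at h1
  linarith

lemma aux_mem_polyBases {n : ℕ} {f : Finset (Fin n) → ℕ} (hf : IsPolymatroidRank n f)
    (a : Fin n → ℤ) : a ∈ polyBases n f ↔
      AuxFeas (auxG n f) (fun i => (f {i} : ℤ) - a i) ∧
        ∑ i, ((f {i} : ℤ) - a i) = auxG n f univ := by
  have e1 : AuxFeas (auxG n f) (fun i => (f {i} : ℤ) - a i) ↔ ∀ I, ∑ i ∈ I, a i ≤ (f I : ℤ) := by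
    unfold AuxFeas auxG
    refine forall_congr' fun I => ?_
    rw [Finset.sum_sub_distrib]
    constructor <;> intro h <;> linarith
  have e2 : ∑ i, ((f {i} : ℤ) - a i) = auxG n f univ ↔ ∑ i, a i = (f univ : ℤ) := by
    unfold auxG
    rw [Finset.sum_sub_distrib]
    constructor <;> intro h <;> linarith
  rw [e1, e2]
  unfold polyBases
  rw [mem_filter]
  constructor
  · rintro ⟨_, _, h⟩
    exact h
  · rintro ⟨h1, h2⟩
    have h0 : ∀ i, 0 ≤ a i := by
      intro i
      have h3 := h1 (univ.erase i)
      have h4 := Finset.add_sum_erase univ a (mem_univ i)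
      have h5 : (f (univ.erase i) : ℤ) ≤ f univ := by exact_mod_cast hf.2.1 _ _ (subset_univ _)
      linarith
    refine ⟨?_, h0, h1, h2⟩
    rw [mem_image]
    have hle : ∀ i, a i ≤ f univ := by
      intro i
      rw [← h2]
      exact Finset.single_le_sum (fun t _ => h0 t) (mem_univ i)
    refine ⟨fun i => ⟨(a i).toNat, by have := hle i; have := h0 i; omega⟩, mem_univ _, ?_⟩
    funext i
    have := h0 i
    simp
    omega

lemma aux_mem_intAct {n : ℕ} {f : Finset (Fin n) → ℕ} (hf : IsPolymatroidRank n f)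
    (a : Fin n → ℤ) (ha : a ∈ polyBases n f) (i : Fin n) : i ∈ intAct n f a ↔
      ∀ j < i, ¬ AuxFeas (auxG n f) (auxMove (fun i => (f {i} : ℤ) - a i) i j) := by
  unfold intAct
  simp only [mem_filter, mem_univ, true_and]
  refine forall_congr' fun j => forall_congr' fun hj => not_congr ?_
  rw [aux_mem_polyBases hf]
  have e : (fun t => (f {t} : ℤ) - (a t - (if t = i then 1 else 0) + (if t = j then 1 else 0)))
      = auxMove (fun i => (f {i} : ℤ) - a i) i j := by
    funext t; unfold auxMove; ring
  have h2 := ((aux_mem_polyBases hf a).1 ha).2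
  have h3 := auxMove_sum (fun i => (f {i} : ℤ) - a i) i j univ
  rw [← e] at h3 ⊢
  simp only [mem_univ, if_true] at h3
  constructor
  · exact fun h => h.1
  · intro h
    refine ⟨h, ?_⟩
    rw [h3, h2]; ring

lemma aux_card_piAntidiag {n : ℕ} (s : Finset (Fin n)) (k : ℕ) :
    (piAntidiag s k).card = Nat.multichoose s.card k := by
  rw [← card_finsuppAntidiag_nat_eq_multichoose]
  simp [finsuppAntidiag]

open Classical in
lemma aux_count {n : ℕ} {f : Finset (Fin n) → ℕ} (hf : IsPolymatroidRank n f) (d k : ℕ)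
    (hd : (d : ℤ) = auxG n f univ) :
    ((piAntidiag (univ : Finset (Fin n)) (d+k)).filter
      fun b => AuxFeas (auxG n f) (fun i => (b i : ℤ))).card
      = ∑ a ∈ polyBases n f, Nat.multichoose (intAct n f a).card k := by
  have hg := auxG_sup hf
  have e : ∀ a ∈ polyBases n f, Nat.multichoose (intAct n f a).card k
      = (piAntidiag (intAct n f a) k).card := fun a _ => (aux_card_piAntidiag _ _).symm
  rw [Finset.sum_congr rfl e, ← Finset.card_sigma]
  symm
  have hfacts : ∀ p ∈ (polyBases n f).sigma fun a => piAntidiag (intAct n f a) k,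
      (AuxFeas (auxG n f) (fun i => (f {i} : ℤ) - p.1 i)) ∧
      (∑ i, ((f {i} : ℤ) - p.1 i) = auxG n f univ) ∧ (∑ i, p.2 i = k) ∧
      (∀ i, (((((f {i} : ℤ) - p.1 i).toNat + p.2 i : ℕ)) : ℤ) = ((f {i} : ℤ) - p.1 i) + p.2 i) ∧
      (∀ i, (f {i} : ℤ) - p.1 i < ((f {i} : ℤ) - p.1 i) + p.2 i → 
        ∀ j < i, ¬ AuxFeas (auxG n f) (auxMove (fun i => (f {i} : ℤ) - p.1 i) i j)) := by
    rintro ⟨a, c⟩ hp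
    rw [mem_sigma] at hp
    obtain ⟨ha, hc⟩ := hp
    dsimp only at ha hc ⊢
    obtain ⟨h1, h2⟩ := (aux_mem_polyBases hf a).1 ha
    rw [mem_piAntidiag] at hc
    refine ⟨h1, h2, ?_, ?_, ?_⟩
    · rw [← hc.1]
      symm
      apply Finset.sum_subset (subset_univ _)
      intro i _ hi
      by_contra hh
      exact hi (hc.2 i hh)
    · intro i
      have := h1.nonneg hg i
      push_cast
      rw [Int.toNat_of_nonneg this]
    · intro i hi
      exact (aux_mem_intAct hf a ha i).1 (hc.2 i (by omega))
  refine Finset.card_bij (fun p _ i => ((f {i} : ℤ) - p.1 i).toNat + p.2 i) ?_ ?_ ?_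
  · intro p hp
    obtain ⟨h1, h2, h3, h4, h5⟩ := hfacts p hp
    rw [mem_filter, mem_piAntidiag]
    refine ⟨⟨?_, by simp⟩, ?_⟩
    · zify
      have : ∀ i ∈ (univ : Finset (Fin n)), _ := fun i _ => h4 i
      push_cast at this
      rw [Finset.sum_congr rfl this, Finset.sum_add_distrib, h2, ← hd]
      congr 1
      exact_mod_cast h3
    · intro I
      refine (h1 I).trans (Finset.sum_le_sum fun i _ => ?_)
      rw [h4 i]
      omega
  · rintro ⟨a1, c1⟩ hp1 ⟨a2, c2⟩ hp2 heq
    obtain ⟨h1, h2, h3, h4, h5⟩ := hfacts _ hp1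
    obtain ⟨k1, k2, k3, k4, k5⟩ := hfacts _ hp2
    dsimp only at *
    have heq' : ∀ i, ((f {i} : ℤ) - a1 i) + c1 i = ((f {i} : ℤ) - a2 i) + c2 i := by
      intro i
      rw [← h4 i, ← k4 i]
      exact_mod_cast congrFun heq i
    have hb := aux_unique hg (fun i => ((f {i} : ℤ) - a1 i) + c1 i) _ _ h1 (fun i => by omega) h2 h5 k1
      (fun i => by rw [heq' i]; omega) k2 (fun i => by rw [heq' i]; exact k5 i)
    have ha : a1 = a2 := by
      funext i
      have := congrFun hb i
      omega
    subst ha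
    have : c1 = c2 := by
      funext i
      have := heq' i
      omega
    rw [this]
  · intro b' hb'
    rw [mem_filter, mem_piAntidiag] at hb'
    obtain ⟨⟨hs, _⟩, hF⟩ := hb'
    obtain ⟨b, h1, h2, h3, h4⟩ := aux_exists hg k (fun i => (b' i : ℤ)) hF (by
      rw [← hd]; exact_mod_cast hs)
    have eb : (fun i => (f {i} : ℤ) - ((f {i} : ℤ) - b i)) = b := by funext i; ring
    have ha : (fun i => (f {i} : ℤ) - b i) ∈ polyBases n f := by
      rw [aux_mem_polyBases hf, eb]
      refine ⟨h1, ?_⟩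
      rw [← h3]
    have hn := fun i => h1.nonneg hg i
    have hsum : ∑ i, ((b' i : ℤ) - b i).toNat = k := by
      zify
      have : ∀ i ∈ (univ : Finset (Fin n)), max ((b' i : ℤ) - b i) 0 = (b' i : ℤ) - b i := by
        intro i _
        exact max_eq_left (by have := h2 i; omega)
      simp only [Int.ofNat_toNat]
      rw [Finset.sum_congr rfl this, Finset.sum_sub_distrib, h3, ← hd]
      have : (∑ i, (b' i : ℤ)) = d + k := by exact_mod_cast hs
      omega
    have hsupp : ∀ i, ((b' i : ℤ) - b i).toNat ≠ 0 → i ∈ intAct n f (fun i => (f {i} : ℤ) - b i) := by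
      intro i hi
      rw [aux_mem_intAct hf _ ha, eb]
      exact h4 i (by omega)
    refine ⟨⟨fun i => (f {i} : ℤ) - b i, fun i => ((b' i : ℤ) - b i).toNat⟩, ?_, ?_⟩
    · rw [mem_sigma]
      refine ⟨ha, ?_⟩
      rw [mem_piAntidiag]
      refine ⟨?_, hsupp⟩
      rw [← hsum]
      apply Finset.sum_subset (subset_univ _)
      intro i _ hi
      by_contra hh
      exact hi (hsupp i hh)
    · funext i
      have := hn i
      have := h2 i
      dsimp only
      omega

lemma aux_coeff {n : ℕ} {f : Finset (Fin n) → ℕ} (i : ℕ) :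
    (interiorPoly n f).coeff i =
      ((polyBases n f).filter fun a => n - (intAct n f a).card = i).card := by
  unfold interiorPoly
  rw [Polynomial.finsetSum_coeff, Finset.card_filter]
  push_cast
  apply Finset.sum_congr rfl
  intro a _
  rw [Polynomial.coeff_X_pow]
  simp only [eq_comm]

lemma aux_fiber {n : ℕ} (hn : 1 ≤ n) (f : Finset (Fin n) → ℕ) (k : ℕ) :
    (∑ a ∈ polyBases n f, (Nat.multichoose (intAct n f a).card k : ℤ)) =
      ∑ i ∈ range n, (interiorPoly n f).coeff i * (Nat.multichoose (n-i) k : ℤ) := by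
  rw [← Finset.sum_fiberwise_of_maps_to (t := range n) (g := fun a => n - (intAct n f a).card)]
  · apply Finset.sum_congr rfl
    intro i hi
    rw [aux_coeff, ← nsmul_eq_mul]
    apply Finset.sum_eq_card_nsmul
    intro a ha
    have h1 := (mem_filter.1 ha).2
    have h2 := Finset.card_le_univ (intAct n f a)
    rw [Fintype.card_fin] at h2
    congr 2
    omega
  · intro a _
    rw [mem_range]
    have : 0 < (intAct n f a).card := by
      rw [Finset.card_pos]
      refine ⟨⟨0, hn⟩, ?_⟩
      unfold intAct
      rw [mem_filter]
      refine ⟨mem_univ _, fun j hj => ?_⟩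
      have : (j : ℕ) < 0 := hj
      omega
    omega

/-- small minimal sets with `g = 1` -/
noncomputable def auxCirc {n : ℕ} (g : Finset (Fin n) → ℤ) (r : ℕ) : Finset (Finset (Fin n)) := by
  classical
  exact univ.filter fun C => C.card < r ∧ g C = 1 ∧ ∀ C', C' ⊂ C → g C' = 0

lemma mem_auxCirc {n : ℕ} (g : Finset (Fin n) → ℤ) (r : ℕ) (C : Finset (Fin n)) :
    C ∈ auxCirc g r ↔ C.card < r ∧ g C = 1 ∧ ∀ C', C' ⊂ C → g C' = 0 := by
  classical
  simp [auxCirc]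

lemma auxCirc_exists {n : ℕ} {g : Finset (Fin n) → ℤ} (hg : AuxSup g) (r : ℕ)
    (I : Finset (Fin n)) (hI : I.card < r) (h1 : g I = 1) : ∃ C ∈ auxCirc g r, C ⊆ I := by
  induction I using Finset.strongInduction with
  | H I ih =>
    by_cases h : ∀ C', C' ⊂ I → g C' = 0
    · exact ⟨I, (mem_auxCirc _ _ _).2 ⟨hI, h1, h⟩, Subset.rfl⟩
    · push Not at h
      obtain ⟨C', hC', hne⟩ := h
      have h2 := hg.mono hC'.subset
      have h3 := hg.nonneg C'
      obtain ⟨C, hC, hCs⟩ := ih C' hC' ((card_le_card hC'.subset).trans_lt hI) (by omega)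
      exact ⟨C, hC, hCs.trans hC'.subset⟩

lemma auxCirc_unique {n : ℕ} {g : Finset (Fin n) → ℤ} (hg : AuxSup g) (r : ℕ)
    (hr : ∀ F : Finset (Fin n), F.card < r → g F ≤ 1)
    (Z C1 C2 : Finset (Fin n)) (hZ : Z.card < r) (h1 : C1 ∈ auxCirc g r) (h2 : C2 ∈ auxCirc g r)
    (hs1 : C1 ⊆ Z) (hs2 : C2 ⊆ Z) : C1 = C2 := by
  rw [mem_auxCirc] at h1 h2
  have a := hg.2.2 C1 C2
  have b := hr (C1 ∪ C2) ((card_le_card (union_subset hs1 hs2)).trans_lt hZ)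
  have c : g (C1 ∩ C2) ≠ 0 := by omega
  have d1 : C1 ∩ C2 = C1 := by
    by_contra hne
    exact c (h1.2.2 _ (Finset.ssubset_iff_subset_ne.2 ⟨inter_subset_left, hne⟩))
  have d2 : C1 ∩ C2 = C2 := by
    by_contra hne
    exact c (h2.2.2 _ (Finset.ssubset_iff_subset_ne.2 ⟨inter_subset_right, hne⟩))
  rw [← d1]; exact d2

open Classical in
lemma aux_pointwise {n : ℕ} {g : Finset (Fin n) → ℤ} (hg : AuxSup g) (r d : ℕ) (hd1 : 1 ≤ d)
    (hd : (d : ℤ) = g univ)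
    (hr : ∀ F : Finset (Fin n), F.card < r → g F ≤ 1) (b : Fin n → ℕ) :
    |(if AuxFeas g (fun i => (b i : ℤ)) then (1:ℤ) else 0) - 1
      + ∑ C ∈ auxCirc g r, (if ∀ i ∈ C, b i = 0 then (1 : ℤ) else 0)|
      ≤ ((auxCirc g r).card + 1) * (if r ≤ (univ.filter fun i => b i < d).card then 1 else 0) := by
  have hS0 : 0 ≤ ∑ C ∈ auxCirc g r, (if ∀ i ∈ C, b i = 0 then (1 : ℤ) else 0) :=
    Finset.sum_nonneg fun C _ => by split_ifs <;> simp
  have hS1 : ∑ C ∈ auxCirc g r, (if ∀ i ∈ C, b i = 0 then (1 : ℤ) else 0) ≤ (auxCirc g r).card := by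
    rw [← Finset.natCast_card_filter]
    exact_mod_cast Finset.card_filter_le _ _
  by_cases hB : r ≤ (univ.filter fun i => b i < d).card
  · rw [if_pos hB, abs_le]
    split_ifs <;> constructor <;> omega
  · rw [if_neg hB, mul_zero, abs_nonpos_iff]
    push Not at hB
    by_cases hF : AuxFeas g (fun i => (b i : ℤ))
    · rw [if_pos hF, Finset.sum_eq_zero]
      · ring
      · intro C hC
        rw [if_neg]
        intro h
        have h1 := hF C
        rw [((mem_auxCirc _ _ _).1 hC).2.1, Finset.sum_eq_zero] at h1
        · omega
        · intro i hi
          simp [h i hi]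
    · rw [if_neg hF]
      unfold AuxFeas at hF
      push Not at hF
      obtain ⟨I, hI⟩ := hF
      have hIle : g I ≤ d := by rw [hd]; exact hg.mono (subset_univ _)
      have hIs : I ⊆ univ.filter fun i => b i < d := by
        intro i hi
        have : (b i : ℤ) ≤ ∑ i ∈ I, (b i : ℤ) :=
          Finset.single_le_sum (f := fun i => (b i : ℤ)) (fun _ _ => by positivity) hi
        simp
        omega
      have hIc : I.card < r := (card_le_card hIs).trans_lt hB
      have hI1 := hr I hIc
      have hnn : 0 ≤ ∑ i ∈ I, (b i : ℤ) := Finset.sum_nonneg fun _ _ => by positivity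
      have hz : ∑ i ∈ I, (b i : ℤ) = 0 := by omega
      have hz' : ∀ i ∈ I, b i = 0 := by
        intro i hi
        have := (Finset.sum_eq_zero_iff_of_nonneg (fun _ _ => by positivity)).1 hz i hi
        exact_mod_cast this
      obtain ⟨C, hC, hCI⟩ := auxCirc_exists hg r I hIc (by omega)
      rw [Finset.sum_eq_single_of_mem C hC]
      · rw [if_pos fun i hi => hz' i (hCI hi)]
        ring
      · intro C' hC' hne
        rw [if_neg]
        intro h
        apply hne
        refine auxCirc_unique hg r hr _ C' C hB hC' hC ?_ ?_
        · intro i hi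
          simp [h i hi]; omega
        · exact hCI.trans hIs

lemma aux_card_zero {n : ℕ} (C : Finset (Fin n)) (m : ℕ) :
    ((piAntidiag (univ : Finset (Fin n)) m).filter fun b => ∀ i ∈ C, b i = 0).card
      = Nat.multichoose (n - C.card) m := by
  have : ((piAntidiag (univ : Finset (Fin n)) m).filter fun b => ∀ i ∈ C, b i = 0)
      = piAntidiag Cᶜ m := by
    ext b
    simp only [mem_filter, mem_piAntidiag, mem_univ, implies_true, and_true, mem_compl]
    have h0 : (∀ i ∈ C, b i = 0) → ∑ i, b i = ∑ i ∈ Cᶜ, b i := by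
      intro h
      rw [← Finset.sum_add_sum_compl C, Finset.sum_eq_zero h, zero_add]
    have h1 : (∀ i ∈ C, b i = 0) ↔ (∀ i, b i ≠ 0 → i ∉ C) := by
      constructor
      · intro h i hi hC; exact hi (h i hC)
      · intro h i hC; by_contra hi; exact h i hi hC
    rw [← h1]
    constructor
    · rintro ⟨a, c⟩; exact ⟨by rw [← h0 c, a], c⟩
    · rintro ⟨a, c⟩; exact ⟨by rw [h0 c, a], c⟩
  rw [this, aux_card_piAntidiag, card_compl, Fintype.card_fin]

lemma aux_card_fix {n : ℕ} (J : Finset (Fin n)) (m : ℕ) (v : Fin n → ℕ) :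
    ((piAntidiag (univ : Finset (Fin n)) m).filter fun b => ∀ i ∈ J, b i = v i).card
      ≤ Nat.multichoose (n - J.card) (m - ∑ i ∈ J, v i) := by
  rw [← aux_card_zero]
  refine Finset.card_le_card_of_injOn (fun b i => if i ∈ J then 0 else b i) ?_ ?_
  · intro b hb
    simp only [coe_filter, Set.mem_ofPred_eq, mem_piAntidiag, mem_univ, implies_true, and_true] at hb ⊢
    refine ⟨?_, fun i hi => by simp [hi]⟩
    rw [← hb.1, ← Finset.sum_add_sum_compl J b, Finset.sum_congr rfl hb.2, Nat.add_sub_cancel_left,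
      ← Finset.sum_add_sum_compl J]
    rw [Finset.sum_eq_zero (fun i hi => by simp [hi]), zero_add]
    exact Finset.sum_congr rfl fun i hi => by simp [mem_compl.1 hi]
  · intro b1 h1 b2 h2 h
    simp only [coe_filter, Set.mem_ofPred_eq] at h1 h2
    funext i
    by_cases hi : i ∈ J
    · rw [h1.2 i hi, h2.2 i hi]
    · have := congrFun h i
      simpa [hi] using this

lemma aux_card_B (n r d : ℕ) : ∃ K : ℕ, ∀ k, n * d + 1 ≤ k →
    ((piAntidiag (univ : Finset (Fin n)) (d+k)).filter
      fun b => r ≤ (univ.filter fun i => b i < d).card).card ≤ K * Nat.multichoose (n-r) k := by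
  refine ⟨((powersetCard r (univ : Finset (Fin n))) ×ˢ (Fintype.piFinset fun _ : Fin n => range (d+1))).card
    * (n-r+1)^d, fun k hk => ?_⟩
  have hsub : ((piAntidiag (univ : Finset (Fin n)) (d+k)).filter
      fun b => r ≤ (univ.filter fun i => b i < d).card) ⊆
      ((powersetCard r (univ : Finset (Fin n))) ×ˢ
        (Fintype.piFinset fun _ : Fin n => range (d+1))).biUnion fun p =>
        ((piAntidiag (univ : Finset (Fin n)) (d+k)).filter fun b => ∀ i ∈ p.1, b i = p.2 i) := by
    intro b hb
    rw [mem_filter] at hb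
    obtain ⟨J, hJ, hJc⟩ := Finset.exists_subset_card_eq hb.2
    rw [mem_biUnion]
    refine ⟨(J, fun i => min (b i) d), ?_, ?_⟩
    · rw [mem_product, mem_powersetCard, Fintype.mem_piFinset]
      refine ⟨⟨subset_univ _, hJc⟩, fun i => ?_⟩
      rw [mem_range]
      exact Nat.lt_succ_of_le (min_le_right (b i) d)
    · rw [mem_filter]
      refine ⟨hb.1, fun i hi => ?_⟩
      have := (mem_filter.1 (hJ hi)).2
      exact (min_eq_left this.le).symm
  refine (card_le_card hsub).trans ?_
  rw [mul_assoc]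
  apply Finset.card_biUnion_le_card_mul
  rintro ⟨J, v⟩ hp
  rw [mem_product, mem_powersetCard, Fintype.mem_piFinset] at hp
  obtain ⟨⟨_, hJ⟩, hv⟩ := hp
  dsimp only at hJ hv ⊢
  have hs : ∑ i ∈ J, v i ≤ n * d := by
    calc ∑ i ∈ J, v i ≤ ∑ i, v i := Finset.sum_le_sum_of_subset (subset_univ _)
      _ ≤ ∑ i : Fin n, d := Finset.sum_le_sum fun i _ => by have := mem_range.1 (hv i); omega
      _ = n * d := by simp
  calc _ ≤ _ := aux_card_fix J (d+k) v
    _ ≤ Nat.multichoose (n-r) (d+k) := by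
      rw [hJ]
      exact aux_mc_mono_right _ (by omega) (by omega)
    _ ≤ _ := aux_mc_shift _ _ (by omega)

/-- the predicted coefficients -/
noncomputable def auxW {n : ℕ} (g : Finset (Fin n) → ℤ) (r : ℕ) (j : ℕ) : ℤ :=
  (if j = 0 then 1 else 0) - ∑ C ∈ auxCirc g r, if C.card = j then 1 else 0

lemma auxW_cv {n : ℕ} (g : Finset (Fin n) → ℤ) (r d i : ℕ) :
    auxCv (auxW g r) d i = Nat.multichoose d i
      - ∑ C ∈ auxCirc g r, if C.card ≤ i then (Nat.multichoose d (i - C.card) : ℤ) else 0 := by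
  unfold auxCv auxW
  simp only [sub_mul, Finset.sum_sub_distrib, Finset.sum_mul]
  rw [Finset.sum_comm]
  congr 1
  · simp
  · apply Finset.sum_congr rfl
    intro C _
    simp

lemma aux_shifted (n c d k : ℕ) (hc : c ≤ n) (hd : 1 ≤ d) :
    (Nat.multichoose (n - c) (d+k) : ℤ) = ∑ i ∈ range n,
      (if c ≤ i then (Nat.multichoose d (i - c) : ℤ) else 0) * (Nat.multichoose (n-i) k : ℤ) := by
  obtain ⟨m, rfl⟩ := Nat.exists_eq_add_of_le hc
  rw [Finset.sum_range_add, Finset.sum_eq_zero, zero_add, Nat.add_sub_cancel_left,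
    aux_mc_conv' k m d hd]
  · push_cast
    apply Finset.sum_congr rfl
    intro i _
    have : c + m - (c + i) = m - i := by omega
    simp [this]
  · intro i hi
    rw [if_neg (by have := mem_range.1 hi; omega), zero_mul]

open Classical Asymptotics Filter in
lemma aux_formula {n : ℕ} {f : Finset (Fin n) → ℕ} (hf : IsPolymatroidRank n f) (r d : ℕ)
    (hn : 1 ≤ n) (hrn : r ≤ n) (hd1 : 1 ≤ d) (hd : (d : ℤ) = auxG n f univ)
    (hr : ∀ F : Finset (Fin n), F.card < r → auxG n f F ≤ 1) :
    ∀ i < r, (interiorPoly n f).coeff i = auxCv (auxW (auxG n f) r) d i := by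
  have hg := auxG_sup hf
  set g := auxG n f with hgdef
  have hE : ∀ k, ∑ i ∈ range n, ((interiorPoly n f).coeff i - auxCv (auxW g r) d i)
      * (Nat.multichoose (n-i) k : ℤ) =
      ∑ b ∈ piAntidiag (univ : Finset (Fin n)) (d+k),
        ((if AuxFeas g (fun i => (b i : ℤ)) then (1:ℤ) else 0) - 1
      + ∑ C ∈ auxCirc g r, (if ∀ i ∈ C, b i = 0 then (1 : ℤ) else 0)) := by
    intro k
    rw [Finset.sum_add_distrib, Finset.sum_sub_distrib, Finset.sum_comm,
      ← Finset.natCast_card_filter, aux_count hf d k hd]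
    push_cast
    rw [aux_fiber hn]
    have e1 : ∑ b ∈ piAntidiag (univ : Finset (Fin n)) (d+k), (1 : ℤ)
        = ∑ i ∈ range n, (Nat.multichoose d i : ℤ) * (Nat.multichoose (n-i) k : ℤ) := by
      rw [Finset.sum_const, aux_card_piAntidiag, card_univ, Fintype.card_fin, nsmul_eq_mul, mul_one,
        aux_mc_conv' k n d hd1]
      push_cast; rfl
    have e2 : ∑ C ∈ auxCirc g r, ∑ b ∈ piAntidiag (univ : Finset (Fin n)) (d+k),
        (if ∀ i ∈ C, b i = 0 then (1 : ℤ) else 0) = ∑ i ∈ range n, (∑ C ∈ auxCirc g r,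
          if C.card ≤ i then (Nat.multichoose d (i - C.card) : ℤ) else 0)
            * (Nat.multichoose (n-i) k : ℤ) := by
      simp only [Finset.sum_mul]
      rw [Finset.sum_comm (s := range n)]
      apply Finset.sum_congr rfl
      intro C _
      rw [← aux_shifted n C.card d k (by simpa using Finset.card_le_univ C) hd1,
        ← Finset.natCast_card_filter, ← aux_card_zero C (d+k)]
    rw [e1, e2, ← Finset.sum_sub_distrib, ← Finset.sum_add_distrib]
    apply Finset.sum_congr rfl
    intro i _
    rw [auxW_cv]
    ring
  obtain ⟨K, hK⟩ := aux_card_B n r d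
  have hbound : ∀ k, n * d + 1 ≤ k →
      |∑ i ∈ range n, ((interiorPoly n f).coeff i - auxCv (auxW g r) d i)
        * (Nat.multichoose (n-i) k : ℤ)| ≤ (((auxCirc g r).card + 1) * K : ℤ) * Nat.multichoose (n-r) k := by
    intro k hk
    rw [hE]
    refine (Finset.abs_sum_le_sum_abs _ _).trans ?_
    refine (Finset.sum_le_sum fun b _ => aux_pointwise hg r d hd1 hd hr b).trans ?_
    rw [← Finset.mul_sum, ← Finset.natCast_card_filter, mul_assoc]
    apply mul_le_mul_of_nonneg_left _ (by positivity)
    exact_mod_cast hK k hk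
  have hlead := aux_lead n r hrn
    (fun i => (((interiorPoly n f).coeff i - auxCv (auxW g r) d i : ℤ) : ℝ)) (by
      refine IsBigO.trans_isLittleO ?_ (aux_mc_o (n-r))
      refine IsBigO.of_bound ((((auxCirc g r).card + 1) * K : ℤ) : ℝ) ?_
      filter_upwards [eventually_ge_atTop (n*d+1)] with k hk
      rw [Real.norm_eq_abs, Real.norm_of_nonneg (by positivity)]
      exact_mod_cast hbound k hk)
  intro i hi
  have := hlead i hi
  have h2 : ((interiorPoly n f).coeff i - auxCv (auxW g r) d i : ℤ) = 0 := by exact_mod_cast this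
  omega

/-- The sequence `[x^0]I_P(x), …, [x^{r'_2(P)-1}]I_P(x)` is unimodal. -/
theorem stmt17 (n : ℕ) (f : Finset (Fin n) → ℕ) (hf : IsPolymatroidRank n f) :
    ∃ k : ℕ,
      (∀ i : ℕ, i < k → i + 1 ≤ rk' n f 2 - 1 →
        (interiorPoly n f).coeff i ≤ (interiorPoly n f).coeff (i + 1)) ∧
      (∀ i : ℕ, k < i → i + 1 ≤ rk' n f 2 - 1 →
        (interiorPoly n f).coeff (i + 1) ≤ (interiorPoly n f).coeff i) := by
  by_cases hne : {m | ∃ F : Finset (Fin n), ((2 : ℕ) : ℤ) ≤ (∑ i ∈ F, (f {i} : ℤ)) - (f F : ℤ) ∧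
      m = F.card}.Nonempty
  · have hg := auxG_sup hf
    obtain ⟨F, hF, hFr⟩ := Nat.sInf_mem hne
    change rk' n f 2 = F.card at hFr
    have hF' : 2 ≤ auxG n f F := hF
    have hmono := hg.mono (subset_univ F)
    have hrn : rk' n f 2 ≤ n := by
      rw [hFr]; simpa using Finset.card_le_univ F
    have hFpos : 0 < F.card := by
      rw [Finset.card_pos, Finset.nonempty_iff_ne_empty]
      rintro rfl
      rw [hg.1] at hF'
      omega
    have hr : ∀ G : Finset (Fin n), G.card < rk' n f 2 → auxG n f G ≤ 1 := by
      intro G hG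
      by_contra h
      push Not at h
      refine Nat.notMem_of_lt_sInf hG ⟨G, ?_, rfl⟩
      exact h
    obtain ⟨d, hd⟩ : ∃ d : ℕ, ((d + 1 : ℕ) : ℤ) = auxG n f univ :=
      ⟨(auxG n f univ - 1).toNat, by omega⟩
    have hform := aux_formula hf (rk' n f 2) (d+1) (by omega) hrn (by omega) hd hr
    obtain ⟨k, hk1, hk2⟩ := auxCv_unimodal (auxW (auxG n f) (rk' n f 2)) (by
        unfold auxW
        rw [Finset.sum_eq_zero]
        · simp
        · intro C hC
          rw [if_neg]
          intro h0
          rw [Finset.card_eq_zero] at h0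
          have := ((mem_auxCirc _ _ _).1 hC).2.1
          rw [h0, hg.1] at this
          omega) (by
        intro j hj
        unfold auxW
        rw [if_neg (by omega)]
        have : (0 : ℤ) ≤ ∑ C ∈ auxCirc (auxG n f) (rk' n f 2), if C.card = j then 1 else 0 :=
          Finset.sum_nonneg fun C _ => by split_ifs <;> simp
        omega) d (rk' n f 2 - 1)
    refine ⟨k, fun i hi hi' => ?_, fun i hi hi' => ?_⟩
    · rw [hform i (by omega), hform (i+1) (by omega)]
      exact hk1 i hi hi'
    · rw [hform i (by omega), hform (i+1) (by omega)]
      exact hk2 i hi hi'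
  · have h0 : rk' n f 2 = 0 := by
      unfold rk'
      rw [Set.not_nonempty_iff_eq_empty.1 hne]
      exact Nat.sInf_empty
    refine ⟨0, fun i hi _ => by omega, fun i _ hi => by omega⟩
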